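/- The Carnot–Carathéodory distance to the identity satisfies the eikonal equation: for every x = (x₁,x₂,x₃) ∈ ℍ with (x₁,x₂) ≠ (0,0), the function d is differentiable at x and |∇d(x)| = ((X₁d(x))² + (X₂d(x))²)^{1/2} = 1. -/

import Mathlib

open MeasureTheory Real Filter

noncomputable section

/-- The underlying space of the Heisenberg group: `ℝ³`. -/
abbrev Heis : Type := ℝ × ℝ × ℝ

/-- The Heisenberg group multiplication. -/
def Hmul (x y : Heis) : Heis :=
  (x.1 + y.1, x.2.1 + y.2.1,
    x.2.2 + y.2.2 + (x.1 * y.2.1 - x.2.1 * y.1) / 2)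

/-- The identity element of the Heisenberg group. -/
def He : Heis := ((0 : ℝ), (0 : ℝ), (0 : ℝ))

/-- The left-invariant vector field `X₁ = ∂₁ - (x₂/2) ∂₃` acting on functions. -/
def X1 (f : Heis → ℝ) (x : Heis) : ℝ :=
  fderiv ℝ f x (1, 0, 0) - x.2.1 / 2 * fderiv ℝ f x (0, 0, 1)

/-- The left-invariant vector field `X₂ = ∂₂ + (x₁/2) ∂₃` acting on functions. -/
def X2 (f : Heis → ℝ) (x : Heis) : ℝ :=
  fderiv ℝ f x (0, 1, 0) + x.1 / 2 * fderiv ℝ f x (0, 0, 1)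

/-- The vector field `X₃ = ∂₃` acting on functions. -/
def X3 (f : Heis → ℝ) (x : Heis) : ℝ := fderiv ℝ f x (0, 0, 1)

/-- The length `|∇f|` of the sub-gradient `∇f = (X₁ f, X₂ f)`. -/
def gradLen (f : Heis → ℝ) (x : Heis) : ℝ :=
  Real.sqrt ((X1 f x) ^ 2 + (X2 f x) ^ 2)

/-- The sub-Laplacian `Δ = X₁² + X₂²`. -/
def subLap (f : Heis → ℝ) (x : Heis) : ℝ := X1 (X1 f) x + X2 (X2 f) x

/-- An admissible (horizontal Lipschitz) path from `x` to `y` in the Heisenberg group: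
`γ'(s) = a₁(s) X₁(γ(s)) + a₂(s) X₂(γ(s))` almost everywhere on `[0,1]`. -/
structure AdmissiblePath (x y : Heis) where
  γ : ℝ → Heis
  a1 : ℝ → ℝ
  a2 : ℝ → ℝ
  lipschitz : ∃ K : NNReal, LipschitzOnWith K γ (Set.Icc 0 1)
  meas1 : Measurable a1
  meas2 : Measurable a2
  start : γ 0 = x
  endpoint : γ 1 = y
  admissible : ∀ᵐ s ∂(volume.restrict (Set.Icc (0:ℝ) 1)),
    HasDerivAt γ (a1 s • (((1 : ℝ), (0 : ℝ), -(γ s).2.1 / 2) : Heis)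
      + a2 s • (((0 : ℝ), (1 : ℝ), (γ s).1 / 2) : Heis)) s

/-- The length of an admissible path. -/
def pathLength {x y : Heis} (p : AdmissiblePath x y) : ℝ :=
  ∫ s in Set.Icc (0:ℝ) 1, Real.sqrt (p.a1 s ^ 2 + p.a2 s ^ 2)

/-- The Carnot–Carathéodory distance on the Heisenberg group. -/
def ccDist (x y : Heis) : ℝ :=
  sInf {l : ℝ | ∃ p : AdmissiblePath x y, l = pathLength p}

/-- The Carnot–Carathéodory distance to the identity `e`. -/
def ccNorm (x : Heis) : ℝ := ccDist x He

/-- The dilations `δ_λ(x) = (λx₁, λx₂, λ²x₃)`. -/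
def dil (lam : ℝ) (x : Heis) : Heis := (lam * x.1, lam * x.2.1, lam ^ 2 * x.2.2)

end

/-!
Write `q = x₁² + x₂²`. Horizontal curves from `x` to the identity project to plane curves whose
swept area is prescribed by `x₃`, so the shortest ones should lie over circular arcs. If `2t` is
the central angle of the arc, `x₃ / q` determines `t ∈ (-π, π)` by a monotone equation, and the arc
has squared length `q (t / sin t)² = q t cot t + 4 t x₃`.

For every other `s ∈ (-π, π)` the number `q s cot s + 4 s x₃` is a lower bound for the squared
length of every horizontal curve, by a calibration argument. Hence
`d(x)² = max_s (q s cot s + 4 s x₃)`, with a maximiser that depends continuously on `x`. By the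
envelope theorem `d²` is differentiable and its derivative is that of the right-hand side with `s`
frozen at the maximiser `t`, so that
`|∇(d²)|² = 4 q (t² cot² t + t²) = 4 q (t / sin t)² = 4 d²`.
-/

noncomputable section

open Set Topology

section Trigonometry

/-- The solution `u ↦ sin (k u) / k` of `y'' = -k² y`, `y 0 = 0`, `y' 0 = 1`. It is written with
`sinc` so that `k = 0` gives `u` instead of a division by zero. -/
def scaledSin (k u : ℝ) : ℝ := u * sinc (k * u)

lemma mul_sinc (t : ℝ) : t * sinc t = sin t := by
  rcases eq_or_ne t 0 with rfl | ht
  · simp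
  · rw [sinc_of_ne_zero ht, mul_div_cancel₀ _ ht]

lemma sinc_pos {t : ℝ} (ht : t ∈ Ioo (-π) π) : 0 < sinc t := by
  rcases lt_trichotomy t 0 with h | rfl | h
  · rw [sinc_of_ne_zero h.ne]
    exact div_pos_of_neg_of_neg (sin_neg_of_neg_of_neg_pi_lt h ht.1) h
  · simp
  · rw [sinc_of_ne_zero h.ne']
    exact div_pos (sin_pos_of_mem_Ioo ⟨h, ht.2⟩) h

lemma sin_ne_zero {t : ℝ} (ht : t ∈ Ioo (-π) π) (h0 : t ≠ 0) : sin t ≠ 0 := by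
  rw [← mul_sinc]
  exact mul_ne_zero h0 (sinc_pos ht).ne'

lemma mul_scaledSin (k u : ℝ) : k * scaledSin k u = sin (k * u) := by
  rw [scaledSin, ← mul_assoc, mul_sinc]

lemma scaledSin_zero (k : ℝ) : scaledSin k 0 = 0 := by simp [scaledSin]

lemma scaledSin_one (k : ℝ) : scaledSin k 1 = sinc k := by simp [scaledSin]

lemma scaledSin_pos {k u : ℝ} (hu : 0 < u) (hku : k * u ∈ Ioo (-π) π) : 0 < scaledSin k u :=
  mul_pos hu (sinc_pos hku)

lemma cos_sq_add_mul_scaledSin_sq (k u : ℝ) : cos (k * u) ^ 2 + (k * scaledSin k u) ^ 2 = 1 := by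
  rw [mul_scaledSin, cos_sq_add_sin_sq]

lemma hasDerivAt_cos_mul (k u : ℝ) :
    HasDerivAt (fun u ↦ cos (k * u)) (-(k ^ 2 * scaledSin k u)) u := by
  refine ((hasDerivAt_id u).const_mul k).cos.congr_deriv ?_
  rw [id_eq, ← mul_scaledSin]
  ring

lemma hasDerivAt_scaledSin (k u : ℝ) : HasDerivAt (scaledSin k) (cos (k * u)) u := by
  rcases eq_or_ne k 0 with rfl | hk
  · have h : scaledSin 0 = id := funext fun u ↦ by simp [scaledSin]
    simpa [h] using hasDerivAt_id u
  · have h : scaledSin k = fun u ↦ sin (k * u) / k := by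
      ext u
      rw [← mul_scaledSin, mul_div_cancel_left₀ _ hk]
    rw [h]
    refine (((hasDerivAt_id u).const_mul k).sin.div_const k).congr_deriv ?_
    simp [hk]

lemma contDiff_scaledSin (k : ℝ) : ContDiff ℝ 1 (scaledSin k) := by
  have h : deriv (scaledSin k) = fun u ↦ cos (k * u) :=
    funext fun u ↦ (hasDerivAt_scaledSin k u).deriv
  refine contDiff_one_iff_deriv.2 ⟨fun u ↦ (hasDerivAt_scaledSin k u).differentiableAt, ?_⟩
  rw [h]
  fun_prop

lemma hasDerivAt_cos_div_scaledSin {k u : ℝ} (h : scaledSin k u ≠ 0) :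
    HasDerivAt (fun u ↦ cos (k * u) / scaledSin k u) (-1 / scaledSin k u ^ 2) u := by
  refine ((hasDerivAt_cos_mul k u).div (hasDerivAt_scaledSin k u) h).congr_deriv ?_
  congr 1
  linear_combination -cos_sq_add_mul_scaledSin_sq k u

lemma mul_cos_lt_sin {t : ℝ} (h0 : 0 < t) (hπ : t < π) : t * cos t < sin t := by
  have hderiv (s : ℝ) : HasDerivAt (fun s ↦ sin s - s * cos s) (s * sin s) s :=
    ((hasDerivAt_sin s).sub ((hasDerivAt_id s).mul (hasDerivAt_cos s))).congr_deriv (by simp)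
  have hmono : StrictMonoOn (fun s : ℝ ↦ sin s - s * cos s) (Icc 0 π) := by
    refine strictMonoOn_of_deriv_pos (convex_Icc 0 π) (by fun_prop) fun s hs ↦ ?_
    rw [interior_Icc] at hs
    rw [(hderiv s).deriv]
    exact mul_pos hs.1 (sin_pos_of_mem_Ioo hs)
  simpa using hmono (left_mem_Icc.2 pi_pos.le) ⟨h0.le, hπ.le⟩ h0

end Trigonometry

section AreaRatio

/-- The area between a circular arc of central angle `2t` and its chord, divided by the squared
length of the chord. Division by zero gives the correct value `0` at `t = 0`. -/
def areaRatio (t : ℝ) : ℝ := (t - sin t * cos t) / (4 * sin t ^ 2)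

lemma areaRatio_zero : areaRatio 0 = 0 := by simp [areaRatio]

lemma areaRatio_neg (t : ℝ) : areaRatio (-t) = -areaRatio t := by
  simp only [areaRatio, sin_neg, cos_neg]
  ring

lemma cos_div_sinc_add_mul_areaRatio {t : ℝ} (ht : t ∈ Ioo (-π) π) :
    cos t / sinc t + 4 * t * areaRatio t = (sinc t ^ 2)⁻¹ := by
  rcases eq_or_ne t 0 with rfl | h0
  · simp
  · have hsin := sin_ne_zero ht h0
    rw [sinc_of_ne_zero h0, areaRatio]
    field_simp
    ring

lemma abs_areaRatio_le (t : ℝ) : |areaRatio t| ≤ |t| / (6 * sinc t ^ 2) := by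
  wlog h0 : 0 < t generalizing t
  · rcases (not_lt.1 h0).eq_or_lt with rfl | hneg
    · simp [areaRatio_zero]
    · simpa [areaRatio_neg] using this (-t) (neg_pos.2 hneg)
  have hupper := sin_lt (x := 2 * t) (by positivity)
  have hlower := sin_gt_sub_cube (x := 2 * t) (by positivity)
  rw [sin_two_mul] at hupper hlower
  have hnum : |t - sin t * cos t| ≤ 2 / 3 * t ^ 3 :=
    abs_le.2 ⟨by nlinarith [pow_pos h0 3], by nlinarith⟩
  calc |areaRatio t| = |t - sin t * cos t| / (4 * sin t ^ 2) := by
        rw [areaRatio, abs_div, abs_of_nonneg (a := 4 * sin t ^ 2) (by positivity)]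
    _ ≤ 2 / 3 * t ^ 3 / (4 * sin t ^ 2) := by gcongr
    _ = |t| / (6 * sinc t ^ 2) := by
        rw [abs_of_pos h0, sinc_of_ne_zero h0.ne']
        field_simp
        ring

lemma continuousAt_areaRatio_zero : ContinuousAt areaRatio 0 := by
  have hbound : ContinuousAt (fun t : ℝ ↦ |t| / (6 * sinc t ^ 2)) 0 := by
    have := continuous_sinc.continuousAt (x := 0)
    fun_prop (disch := simp)
  rw [ContinuousAt, areaRatio_zero]
  exact squeeze_zero_norm abs_areaRatio_le (by simpa [ContinuousAt] using hbound)

lemma hasDerivAt_areaRatio {t : ℝ} (ht : sin t ≠ 0) :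
    HasDerivAt areaRatio ((sin t - t * cos t) / (2 * sin t ^ 3)) t := by
  have hnum : HasDerivAt (fun t : ℝ ↦ t - sin t * cos t) (2 * sin t ^ 2) t := by
    refine ((hasDerivAt_id t).sub ((hasDerivAt_sin t).mul (hasDerivAt_cos t))).congr_deriv ?_
    linear_combination -sin_sq_add_cos_sq t
  have hden : HasDerivAt (fun t : ℝ ↦ 4 * sin t ^ 2) (8 * sin t * cos t) t := by
    refine (((hasDerivAt_sin t).pow 2).const_mul 4).congr_deriv ?_
    push_cast
    ring
  refine (hnum.div hden (by positivity)).congr_deriv ?_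
  field_simp
  linear_combination 16 * sin t * sin_sq_add_cos_sq t

lemma continuousOn_areaRatio : ContinuousOn areaRatio (Ioo (-π) π) := fun t ht ↦ by
  rcases eq_or_ne t 0 with rfl | h0
  · exact continuousAt_areaRatio_zero.continuousWithinAt
  · exact (hasDerivAt_areaRatio (sin_ne_zero ht h0)).continuousAt.continuousWithinAt

lemma deriv_areaRatio_pos {t : ℝ} (ht : t ∈ Ioo (-π) π) (h0 : t ≠ 0) : 0 < deriv areaRatio t := by
  rw [(hasDerivAt_areaRatio (sin_ne_zero ht h0)).deriv]
  rcases h0.lt_or_gt with hneg | hpos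
  · have hlt := mul_cos_lt_sin (neg_pos.2 hneg) (by linarith [ht.1])
    rw [cos_neg, sin_neg] at hlt
    have hsin := sin_neg_of_neg_of_neg_pi_lt hneg ht.1
    exact div_pos_of_neg_of_neg (by linarith) (by nlinarith [sq_pos_of_neg hsin])
  · have hsin := sin_pos_of_mem_Ioo ⟨hpos, ht.2⟩
    exact div_pos (by linarith [mul_cos_lt_sin hpos ht.2]) (by positivity)

lemma strictMonoOn_areaRatio : StrictMonoOn areaRatio (Ioo (-π) π) := by
  rw [← Ioc_union_Ico_eq_Ioo (neg_lt_zero.2 pi_pos) pi_pos]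
  refine StrictMonoOn.union ?_ ?_ (isGreatest_Ioc (neg_lt_zero.2 pi_pos)) (isLeast_Ico pi_pos)
  · refine strictMonoOn_of_deriv_pos (convex_Ioc _ _)
      (continuousOn_areaRatio.mono (Ioc_subset_Ioo_right pi_pos)) fun t ht ↦ ?_
    rw [interior_Ioc] at ht
    exact deriv_areaRatio_pos ⟨ht.1, ht.2.trans pi_pos⟩ ht.2.ne
  · refine strictMonoOn_of_deriv_pos (convex_Ico _ _)
      (continuousOn_areaRatio.mono (Ico_subset_Ioo_left (neg_lt_zero.2 pi_pos))) fun t ht ↦ ?_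
    rw [interior_Ico] at ht
    exact deriv_areaRatio_pos ⟨(neg_lt_zero.2 pi_pos).trans ht.1, ht.2⟩ ht.1.ne'

lemma tendsto_areaRatio_pi : Tendsto areaRatio (𝓝[<] π) atTop := by
  have hnum : Tendsto (fun t ↦ t - sin t * cos t) (𝓝[<] π) (𝓝 π) := by
    have h : Continuous fun t : ℝ ↦ t - sin t * cos t := by fun_prop
    simpa using (h.tendsto π).mono_left nhdsWithin_le_nhds
  have hden : Tendsto (fun t ↦ 4 * sin t ^ 2) (𝓝[<] π) (𝓝[>] 0) := by
    have h : Continuous fun t : ℝ ↦ 4 * sin t ^ 2 := by fun_prop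
    refine tendsto_nhdsWithin_iff.2
      ⟨by simpa using (h.tendsto π).mono_left nhdsWithin_le_nhds, ?_⟩
    filter_upwards [Ioo_mem_nhdsLT pi_pos] with t ht
    have := sin_pos_of_mem_Ioo ht
    exact mem_Ioi.2 (by positivity)
  exact hnum.pos_mul_atTop pi_pos hden.inv_tendsto_nhdsGT_zero

lemma surjOn_areaRatio : SurjOn areaRatio (Ioo (-π) π) univ := by
  have hπ : -π < π := neg_lt_self pi_pos
  have hbot : Tendsto areaRatio (𝓝[>] (-π)) atBot := by
    have hneg : Tendsto Neg.neg (𝓝[>] (-π)) (𝓝[<] π) := by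
      simpa using tendsto_neg_nhdsGT (a := -π)
    simpa [Function.comp_def, areaRatio_neg] using
      tendsto_neg_atTop_atBot.comp (tendsto_areaRatio_pi.comp hneg)
  exact continuousOn_areaRatio.surjOn_of_tendsto (nonempty_Ioo.2 hπ)
    ((tendsto_comp_coe_Ioo_atBot hπ).2 hbot)
    ((tendsto_comp_coe_Ioo_atTop hπ).2 tendsto_areaRatio_pi)

/-- The increasing bijection `areaRatio` from `(-π, π)` to `ℝ`, as an order isomorphism. -/
def areaRatioIso : Ioo (-π) π ≃o ℝ :=
  StrictMono.orderIsoOfSurjective (fun t : Ioo (-π) π ↦ areaRatio t)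
    (strictMono_domRestrict.2 strictMonoOn_areaRatio) (surjOn_iff_surjective.1 surjOn_areaRatio)

/-- Half the central angle of the circular arc whose `areaRatio` is `w`. -/
def halfAngle (w : ℝ) : ℝ := areaRatioIso.symm w

lemma halfAngle_mem (w : ℝ) : halfAngle w ∈ Ioo (-π) π := (areaRatioIso.symm w).2

lemma areaRatio_halfAngle (w : ℝ) : areaRatio (halfAngle w) = w :=
  areaRatioIso.apply_symm_apply w

lemma continuous_halfAngle : Continuous halfAngle :=
  continuous_subtype_val.comp areaRatioIso.symm.continuous

end AreaRatio

section LipschitzCurves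

lemma exists_lipschitzOnWith_comp {α E F : Type*} [PseudoEMetricSpace α]
    [NormedAddCommGroup E] [NormedSpace ℝ E] [NormedAddCommGroup F] [NormedSpace ℝ F]
    {G : E → F} {c : α → E} {K : NNReal} {s : Set α} (hs : IsCompact s)
    (hc : LipschitzOnWith K c s) (hG : ∀ r ∈ s, ContDiffAt ℝ 1 G (c r)) :
    ∃ M, LipschitzOnWith M (G ∘ c) s := by
  obtain ⟨M, hM⟩ : ∃ M, LipschitzOnWith M G (c '' s) := by
    refine LocallyLipschitzOn.exists_lipschitzOnWith_of_compact
      (hs.image_of_continuousOn hc.continuousOn) ?_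
    rintro _ ⟨r, hr, rfl⟩
    obtain ⟨C, t, ht, hC⟩ := (hG r hr).exists_lipschitzOnWith
    exact ⟨C, t, mem_nhdsWithin_of_mem_nhds ht, hC⟩
  exact ⟨M * K, hM.comp hc (mapsTo_image c s)⟩

lemma sub_le_integral_of_neg_le_deriv {f v : ℝ → ℝ} {K : NNReal} {a b : ℝ} (hab : a ≤ b)
    (hf : LipschitzOnWith K f (Icc a b)) (hv : IntegrableOn v (Icc a b))
    (hderiv : ∀ᵐ s ∂volume.restrict (Icc a b), -v s ≤ deriv f s) :
    f a - f b ≤ ∫ s in Icc a b, v s := by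
  have hac : AbsolutelyContinuousOnInterval f a b :=
    LipschitzOnWith.absolutelyContinuousOnInterval (K := K) (by rwa [uIcc_of_le hab])
  have hint : IntegrableOn (deriv f) (Icc a b) :=
    (intervalIntegrable_iff_integrableOn_Icc_of_le hab).1 hac.intervalIntegrable_deriv
  have hmono := setIntegral_mono_ae_restrict hv.neg hint hderiv
  have hFTC := hac.integral_deriv_eq_sub
  rw [intervalIntegral.integral_of_le hab, ← integral_Icc_eq_integral_Ioc] at hFTC
  simp only [Pi.neg_apply, integral_neg] at hmono
  linarith

end LipschitzCurves

namespace AdmissiblePath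

variable {x y : Heis} (P : AdmissiblePath x y)

/-- The horizontal speed of an admissible path, whose integral is the length. -/
def speed (s : ℝ) : ℝ := √(P.a1 s ^ 2 + P.a2 s ^ 2)

lemma speed_nonneg (s : ℝ) : 0 ≤ P.speed s := sqrt_nonneg _

lemma measurable_speed : Measurable P.speed :=
  ((P.meas1.pow_const 2).add (P.meas2.pow_const 2)).sqrt

lemma ae_hasDerivAt_components : ∀ᵐ s ∂volume.restrict (Icc (0 : ℝ) 1),
    HasDerivAt (fun s ↦ (P.γ s).1) (P.a1 s) s ∧
    HasDerivAt (fun s ↦ (P.γ s).2.1) (P.a2 s) s ∧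
    HasDerivAt (fun s ↦ (P.γ s).2.2) (((P.γ s).1 * P.a2 s - (P.γ s).2.1 * P.a1 s) / 2) s := by
  filter_upwards [P.admissible] with s hs
  have hvert := hasFDerivAt_snd.comp_hasDerivAt s hs
  refine ⟨?_, ?_, ?_⟩
  · simpa [Function.comp_def] using hasFDerivAt_fst.comp_hasDerivAt s hs
  · simpa [Function.comp_def] using hasFDerivAt_fst.comp_hasDerivAt s hvert
  · refine (hasFDerivAt_snd.comp_hasDerivAt s hvert).congr_deriv ?_
    simp only [Prod.smul_mk, smul_eq_mul, mul_one, mul_zero, Prod.mk_add_mk, add_zero, zero_add,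
      ContinuousLinearMap.coe_snd']
    ring

lemma exists_ae_speed_le : ∃ C, ∀ᵐ s ∂volume.restrict (Icc (0 : ℝ) 1), P.speed s ≤ C := by
  obtain ⟨K, hK⟩ := P.lipschitz
  have hinterior : ∀ᵐ s ∂volume.restrict (Icc (0 : ℝ) 1), s ∈ Ioo (0 : ℝ) 1 := by
    rw [← restrict_Ioo_eq_restrict_Icc]
    exact ae_restrict_mem measurableSet_Ioo
  refine ⟨√(K ^ 2 + K ^ 2), ?_⟩
  filter_upwards [P.ae_hasDerivAt_components, hinterior] with s ⟨h1, h2, _⟩ hs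
  have hnhds := Icc_mem_nhds hs.1 hs.2
  have ha1 : ‖P.a1 s‖ ≤ K := h1.le_of_lipschitzOn hnhds <| by
    simpa [Function.comp_def] using LipschitzWith.prod_fst.comp_lipschitzOnWith hK
  have ha2 : ‖P.a2 s‖ ≤ K := h2.le_of_lipschitzOn hnhds <| by
    simpa [Function.comp_def] using
      (LipschitzWith.prod_fst.comp LipschitzWith.prod_snd).comp_lipschitzOnWith hK
  exact sqrt_le_sqrt <|
    add_le_add (sq_le_sq.2 (by simpa using ha1)) (sq_le_sq.2 (by simpa using ha2))

lemma integrableOn_speed : IntegrableOn P.speed (Icc 0 1) := by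
  obtain ⟨C, hC⟩ := P.exists_ae_speed_le
  refine Measure.integrableOn_of_bounded (M := C) (by simp)
    P.measurable_speed.aestronglyMeasurable ?_
  simpa only [norm_of_nonneg (P.speed_nonneg _)] using hC

lemma intervalIntegrable_speed : IntervalIntegrable P.speed volume 0 1 :=
  (intervalIntegrable_iff_integrableOn_Icc_of_le zero_le_one).2 P.integrableOn_speed

/-- The length of the part of an admissible path traversed after time `s`. -/
def lengthAfter (s : ℝ) : ℝ := ∫ r in s..1, P.speed r

lemma lengthAfter_zero : P.lengthAfter 0 = pathLength P := by
  rw [lengthAfter, intervalIntegral.integral_of_le zero_le_one, ← integral_Icc_eq_integral_Ioc]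
  rfl

lemma pathLength_nonneg : 0 ≤ pathLength P :=
  setIntegral_nonneg measurableSet_Icc fun s _ ↦ P.speed_nonneg s

lemma lengthAfter_one : P.lengthAfter 1 = 0 := intervalIntegral.integral_same

lemma lengthAfter_nonneg {s : ℝ} (hs : s ≤ 1) : 0 ≤ P.lengthAfter s :=
  intervalIntegral.integral_nonneg hs fun r _ ↦ P.speed_nonneg r

lemma lengthAfter_sub {r s : ℝ} (hr : r ∈ Icc (0 : ℝ) 1) (hs : s ∈ Icc (0 : ℝ) 1) :
    P.lengthAfter r - P.lengthAfter s = ∫ u in r..s, P.speed u := by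
  have hint {p q : ℝ} (hp : p ∈ Icc (0 : ℝ) 1) (hq : q ∈ Icc (0 : ℝ) 1) :
      IntervalIntegrable P.speed volume p q :=
    P.intervalIntegrable_speed.mono_set (uIcc_subset_uIcc (by simpa using hp) (by simpa using hq))
  exact sub_eq_of_eq_add
    (intervalIntegral.integral_add_adjacent_intervals (hint hr hs) (hint hs (by simp))).symm

lemma lengthAfter_le {s : ℝ} (hs : s ∈ Icc (0 : ℝ) 1) : P.lengthAfter s ≤ pathLength P := by
  rw [← lengthAfter_zero, ← sub_nonneg, P.lengthAfter_sub (by simp) hs]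
  exact intervalIntegral.integral_nonneg hs.1 fun r _ ↦ P.speed_nonneg r

lemma exists_lipschitzOnWith_lengthAfter : ∃ K, LipschitzOnWith K P.lengthAfter (Icc 0 1) := by
  obtain ⟨C, hC⟩ := P.exists_ae_speed_le
  refine ⟨C.toNNReal, LipschitzOnWith.of_dist_le_mul fun r hr s hs ↦ ?_⟩
  rw [dist_eq_norm, P.lengthAfter_sub hr hs, dist_comm, Real.dist_eq]
  refine intervalIntegral.norm_integral_le_of_norm_le_const_ae ?_
  filter_upwards [(ae_restrict_iff' measurableSet_Icc).1 hC] with u hu hmem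
  rw [norm_of_nonneg (P.speed_nonneg u)]
  exact (hu (uIcc_subset_Icc hr hs (uIoc_subset_uIcc hmem))).trans (le_coe_toNNReal C)

lemma ae_hasDerivAt_lengthAfter : ∀ᵐ s ∂volume.restrict (Icc (0 : ℝ) 1),
    HasDerivAt P.lengthAfter (-P.speed s) s := by
  rw [ae_restrict_iff' measurableSet_Icc]
  filter_upwards [P.intervalIntegrable_speed.ae_hasDerivAt_integral] with s hs hmem
  have hlength : P.lengthAfter = fun s ↦ -∫ r in (1 : ℝ)..s, P.speed r :=
    funext fun s ↦ intervalIntegral.integral_symm 1 s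
  rw [hlength]
  exact (hs (by simpa using hmem) 1 (by simp)).fun_neg

end AdmissiblePath

section LowerBound

/-- The squared horizontal norm and the height of a point, the two quantities through which the
distance to the identity is expressed. -/
def radialCoords (x : Heis) : ℝ × ℝ := (x.1 ^ 2 + x.2.1 ^ 2, x.2.2)

/-- The linear functional `(q, h) ↦ q t cot t + 4 t h`. The squared distance to the identity is the
supremum of these functionals over `t ∈ (-π, π)`, evaluated at the radial coordinates. -/
def supportFunctional (t : ℝ) : ℝ × ℝ →L[ℝ] ℝ :=
  (cos t / sinc t) • ContinuousLinearMap.fst ℝ ℝ ℝ + (4 * t) • ContinuousLinearMap.snd ℝ ℝ ℝ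

lemma supportFunctional_apply (t : ℝ) (p : ℝ × ℝ) :
    supportFunctional t p = cos t / sinc t * p.1 + 4 * t * p.2 := rfl

/-- The calibration: a solution `G` of the Hamilton-Jacobi equation `∂ᵤ G + |∇G|² / 4 = 0`, as a
function of the remaining length `u` and the position. Along an admissible path it decreases by at
most the length travelled. -/
def calibration (k : ℝ) (p : ℝ × Heis) : ℝ :=
  cos (k * p.1) / scaledSin k p.1 * (p.2.1 ^ 2 + p.2.2.1 ^ 2) + 4 * k * p.2.2.2

lemma contDiffAt_calibration {k : ℝ} {p : ℝ × Heis} (hp : scaledSin k p.1 ≠ 0) :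
    ContDiffAt ℝ 1 (calibration k) p := by
  have hsin : ContDiffAt ℝ 1 (fun p : ℝ × Heis ↦ scaledSin k p.1) p :=
    ((contDiff_scaledSin k).comp contDiff_fst).contDiffAt
  unfold calibration
  fun_prop (disch := assumption)

lemma hasDerivAt_calibration_comp {k s v a b : ℝ} {u : ℝ → ℝ} {γ : ℝ → Heis}
    (hS : scaledSin k (u s) ≠ 0) (hu : HasDerivAt u (-v) s)
    (h1 : HasDerivAt (fun s ↦ (γ s).1) a s) (h2 : HasDerivAt (fun s ↦ (γ s).2.1) b s)
    (h3 : HasDerivAt (fun s ↦ (γ s).2.2) (((γ s).1 * b - (γ s).2.1 * a) / 2) s) :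
    HasDerivAt (fun s ↦ calibration k (u s, γ s))
      (v * (((γ s).1 / scaledSin k (u s)) ^ 2 + ((γ s).2.1 / scaledSin k (u s)) ^ 2) +
        2 * (cos (k * u s) *
            ((γ s).1 / scaledSin k (u s) * a + (γ s).2.1 / scaledSin k (u s) * b) +
          k * scaledSin k (u s) *
            ((γ s).1 / scaledSin k (u s) * b - (γ s).2.1 / scaledSin k (u s) * a))) s := by
  have hcoeff := (hasDerivAt_cos_div_scaledSin hS).comp s hu
  refine ((hcoeff.mul ((h1.pow 2).add (h2.pow 2))).add (h3.const_mul (4 * k))).congr_deriv ?_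
  simp only [Function.comp_apply, Pi.add_apply, Pi.pow_apply]
  field_simp
  ring

/-- Cauchy-Schwarz for a rotated pairing, followed by `2 r ≤ 1 + r ^ 2`. -/
lemma neg_sqrt_le_mul_add_rotated_inner {c m : ℝ} (hcm : c ^ 2 + m ^ 2 = 1) (p q a b : ℝ) :
    -√(a ^ 2 + b ^ 2) ≤
      √(a ^ 2 + b ^ 2) * (p ^ 2 + q ^ 2) + 2 * (c * (p * a + q * b) + m * (p * b - q * a)) := by
  set v := √(a ^ 2 + b ^ 2)
  set w := c * (p * a + q * b) + m * (p * b - q * a)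
  have hv : v ^ 2 = a ^ 2 + b ^ 2 := sq_sqrt (by positivity)
  have hcs : w ^ 2 ≤ (p ^ 2 + q ^ 2) * v ^ 2 :=
    calc w ^ 2 ≤ (c ^ 2 + m ^ 2) * ((p * a + q * b) ^ 2 + (p * b - q * a) ^ 2) := by
          linarith [sq_nonneg (c * (p * b - q * a) - m * (p * a + q * b))]
      _ = (p ^ 2 + q ^ 2) * v ^ 2 := by rw [hcm, hv]; ring
  have hsq : (2 * w) ^ 2 ≤ ((1 + (p ^ 2 + q ^ 2)) * v) ^ 2 := by
    nlinarith [mul_nonneg (sq_nonneg (1 - (p ^ 2 + q ^ 2))) (sq_nonneg v)]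
  linarith [(abs_le_of_sq_le_sq' hsq (by positivity)).1]

namespace AdmissiblePath

variable {x y : Heis} (P : AdmissiblePath x y)

lemma ae_neg_speed_le_deriv_calibration {k δ : ℝ}
    (hk : ∀ s ∈ Icc (0 : ℝ) 1, scaledSin k (δ + P.lengthAfter s) ≠ 0) :
    ∀ᵐ s ∂volume.restrict (Icc (0 : ℝ) 1),
      -P.speed s ≤ deriv (calibration k ∘ fun s ↦ (δ + P.lengthAfter s, P.γ s)) s := by
  filter_upwards [P.ae_hasDerivAt_components, P.ae_hasDerivAt_lengthAfter,
    ae_restrict_mem measurableSet_Icc] with s ⟨h1, h2, h3⟩ hlength hs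
  have hderiv := hasDerivAt_calibration_comp (u := fun s ↦ δ + P.lengthAfter s) (hk s hs)
    (hlength.const_add δ) h1 h2 h3
  rw [Function.comp_def, hderiv.deriv]
  exact neg_sqrt_le_mul_add_rotated_inner (cos_sq_add_mul_scaledSin_sq _ _) _ _ _ _

lemma calibration_le_pathLength {k δ : ℝ}
    (hk : ∀ s ∈ Icc (0 : ℝ) 1, scaledSin k (δ + P.lengthAfter s) ≠ 0) :
    calibration k (δ + pathLength P, x) - calibration k (δ, y) ≤ pathLength P := by
  obtain ⟨K, hK⟩ := P.lipschitz
  obtain ⟨M, hM⟩ := P.exists_lipschitzOnWith_lengthAfter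
  have hcurve := ((LipschitzWith.const δ).lipschitzOnWith.add hM).prodMk hK
  obtain ⟨N, hN⟩ := exists_lipschitzOnWith_comp isCompact_Icc hcurve fun s hs ↦
    contDiffAt_calibration (hk s hs)
  simpa [P.lengthAfter_zero, P.lengthAfter_one, P.start, P.endpoint] using!
    sub_le_integral_of_neg_le_deriv zero_le_one hN P.integrableOn_speed
      (P.ae_neg_speed_le_deriv_calibration hk)

lemma supportFunctional_le_mul (P : AdmissiblePath x He) {t δ : ℝ} (ht : t ∈ Ioo (-π) π)
    (hδ : 0 < δ) :
    supportFunctional t (radialCoords x) ≤ pathLength P * (δ + pathLength P) := by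
  have hL : 0 < δ + pathLength P := by
    rw [← P.lengthAfter_zero]
    exact add_pos_of_pos_of_nonneg hδ (P.lengthAfter_nonneg zero_le_one)
  set L := δ + pathLength P
  have hk : ∀ s ∈ Icc (0 : ℝ) 1, scaledSin (t / L) (δ + P.lengthAfter s) ≠ 0 := fun s hs ↦ by
    have hpos : 0 < δ + P.lengthAfter s :=
      add_pos_of_pos_of_nonneg hδ (P.lengthAfter_nonneg hs.2)
    have hle : δ + P.lengthAfter s ≤ L := add_le_add_right (P.lengthAfter_le hs) δ
    refine (scaledSin_pos hpos (abs_lt.1 ?_)).ne'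
    calc |t / L * (δ + P.lengthAfter s)| = |t| * ((δ + P.lengthAfter s) / L) := by
          rw [div_mul_comm, abs_mul, abs_of_pos (div_pos hpos hL), mul_comm]
      _ ≤ |t| * 1 := by gcongr; exact (div_le_one hL).2 hle
      _ < π := by rw [mul_one]; exact abs_lt.2 ht
  have hS : scaledSin (t / L) L = L * sinc t := by rw [scaledSin, div_mul_cancel₀ _ hL.ne']
  have hcal := P.calibration_le_pathLength hk
  have hsinc := sinc_pos ht
  calc supportFunctional t (radialCoords x)
      = (calibration (t / L) (L, x) - calibration (t / L) (δ, He)) * L := by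
        simp only [supportFunctional_apply, radialCoords, calibration, He, hS,
          div_mul_cancel₀ t hL.ne']
        field_simp
        ring
    _ ≤ pathLength P * L := by gcongr

lemma supportFunctional_le_sq (P : AdmissiblePath x He) {t : ℝ} (ht : t ∈ Ioo (-π) π) :
    supportFunctional t (radialCoords x) ≤ pathLength P ^ 2 := by
  have hlim : Tendsto (fun δ ↦ pathLength P * (δ + pathLength P)) (𝓝[>] 0)
      (𝓝 (pathLength P ^ 2)) := by
    have h : Continuous fun δ ↦ pathLength P * (δ + pathLength P) := by fun_prop
    simpa [sq] using (h.tendsto 0).mono_left nhdsWithin_le_nhds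
  exact ge_of_tendsto hlim <| eventually_mem_nhdsWithin.mono fun δ hδ ↦
    P.supportFunctional_le_mul ht hδ

end AdmissiblePath

end LowerBound

section Geodesics

/-- The lift of the circular arc of central angle `2t` running from the horizontal part of `x` to
the origin, with height normalised to vanish at the origin. -/
def geodesicCurve (x : Heis) (t s : ℝ) : Heis :=
  (scaledSin t (1 - s) / sinc t * (x.1 * cos (t * s) + x.2.1 * sin (t * s)),
    scaledSin t (1 - s) / sinc t * (x.2.1 * cos (t * s) - x.1 * sin (t * s)),
    (x.1 ^ 2 + x.2.1 ^ 2) *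
      ((t * (1 - s) - sin (t * (1 - s)) * cos (t * (1 - s))) / (4 * sin t ^ 2)))

/-- The horizontal velocity of `geodesicCurve x t`, which rotates with constant length. -/
def geodesicVelocity (x : Heis) (t s : ℝ) : ℝ × ℝ :=
  (-(x.1 * cos (t * (1 - s) - t * s) - x.2.1 * sin (t * (1 - s) - t * s)) / sinc t,
    -(x.2.1 * cos (t * (1 - s) - t * s) + x.1 * sin (t * (1 - s) - t * s)) / sinc t)

lemma contDiff_geodesicCurve (x : Heis) (t : ℝ) : ContDiff ℝ 1 (geodesicCurve x t) := by
  have hS : ContDiff ℝ 1 fun s ↦ scaledSin t (1 - s) :=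
    (contDiff_scaledSin t).comp (contDiff_const.sub contDiff_id)
  unfold geodesicCurve
  fun_prop

lemma geodesicCurve_zero {x : Heis} {t : ℝ} (ht : sinc t ≠ 0)
    (hx : x.2.2 = (x.1 ^ 2 + x.2.1 ^ 2) * areaRatio t) : geodesicCurve x t 0 = x := by
  simp only [geodesicCurve, sub_zero, mul_one, mul_zero, cos_zero, sin_zero, add_zero,
    scaledSin_one, div_self ht, one_mul]
  rw [← areaRatio, ← hx]

lemma geodesicCurve_one (x : Heis) (t : ℝ) : geodesicCurve x t 1 = He := by
  simp [geodesicCurve, scaledSin_zero, He]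

lemma hasDerivAt_scaledSin_mul_rotation (t a b s : ℝ) :
    HasDerivAt (fun s ↦ scaledSin t (1 - s) * (a * cos (t * s) + b * sin (t * s)))
      (-(a * cos (t * (1 - s) - t * s) - b * sin (t * (1 - s) - t * s))) s := by
  have hS := (hasDerivAt_scaledSin t (1 - s)).comp s ((hasDerivAt_id s).const_sub 1)
  have hmul := (hasDerivAt_id s).const_mul t
  refine (hS.mul ((hmul.cos.const_mul a).add (hmul.sin.const_mul b))).congr_deriv ?_
  simp only [Function.comp_apply, Pi.add_apply, id_eq, cos_sub, sin_sub, ← mul_scaledSin t (1 - s)]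
  ring

lemma hasDerivAt_geodesicCurve_height {x : Heis} {t : ℝ} (ht : t ∈ Ioo (-π) π) (s : ℝ) :
    HasDerivAt (fun s ↦ (geodesicCurve x t s).2.2)
      (-(x.1 ^ 2 + x.2.1 ^ 2) * t * (scaledSin t (1 - s) / sinc t) ^ 2 / 2) s := by
  rcases eq_or_ne t 0 with rfl | h0
  · simpa [geodesicCurve] using hasDerivAt_const s (0 : ℝ)
  have hsin := sin_ne_zero ht h0
  have hu := ((hasDerivAt_id s).const_sub 1).const_mul t
  refine (((hu.sub (hu.sin.mul hu.cos)).div_const (4 * sin t ^ 2)).const_mul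
    (x.1 ^ 2 + x.2.1 ^ 2)).congr_deriv ?_
  have hratio : scaledSin t (1 - s) / sinc t = sin (t * (1 - s)) / sin t := by
    rw [← mul_scaledSin, ← mul_sinc t, mul_div_mul_left _ _ h0]
  rw [hratio]
  field_simp
  simp only [id_eq]
  linear_combination 2 * (x.1 ^ 2 + x.2.1 ^ 2) * sin_sq_add_cos_sq (t * (1 - s))

lemma hasDerivAt_geodesicCurve {x : Heis} {t : ℝ} (ht : t ∈ Ioo (-π) π) (s : ℝ) :
    HasDerivAt (geodesicCurve x t)
      ((geodesicVelocity x t s).1 • ((1, 0, -(geodesicCurve x t s).2.1 / 2) : Heis) +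
        (geodesicVelocity x t s).2 • ((0, 1, (geodesicCurve x t s).1 / 2) : Heis)) s := by
  have h1 := (hasDerivAt_scaledSin_mul_rotation t x.1 x.2.1 s).div_const (sinc t)
  have h2 := (hasDerivAt_scaledSin_mul_rotation t x.2.1 (-x.1) s).div_const (sinc t)
  have h := h1.prodMk (h2.prodMk (hasDerivAt_geodesicCurve_height (x := x) ht s))
  refine (h.congr_deriv ?_).congr_of_eventuallyEq (.of_forall fun s ↦ ?_)
  · have hangle : sin (t * (1 - s) - t * s) * cos (t * s) +
        cos (t * (1 - s) - t * s) * sin (t * s) = t * scaledSin t (1 - s) := by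
      rw [← sin_add, sub_add_cancel, mul_scaledSin]
    simp only [geodesicVelocity, geodesicCurve, Prod.smul_mk, smul_eq_mul, Prod.mk_add_mk,
      mul_one, mul_zero, add_zero, zero_add, Prod.mk.injEq]
    refine ⟨trivial, by ring, ?_⟩
    linear_combination (x.1 ^ 2 + x.2.1 ^ 2) * scaledSin t (1 - s) / (2 * sinc t ^ 2) * hangle
  · simp only [geodesicCurve, Prod.mk.injEq, and_true]
    exact ⟨by ring, by ring⟩

lemma geodesicVelocity_sq (x : Heis) (t s : ℝ) :
    (geodesicVelocity x t s).1 ^ 2 + (geodesicVelocity x t s).2 ^ 2 =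
      (x.1 ^ 2 + x.2.1 ^ 2) / sinc t ^ 2 := by
  simp only [geodesicVelocity, div_pow, ← add_div]
  congr 1
  linear_combination (x.1 ^ 2 + x.2.1 ^ 2) * sin_sq_add_cos_sq (t * (1 - s) - t * s)

/-- The geodesic from `x` to the identity, as an admissible path. -/
def geodesic {x : Heis} {t : ℝ} (ht : t ∈ Ioo (-π) π)
    (hx : x.2.2 = (x.1 ^ 2 + x.2.1 ^ 2) * areaRatio t) : AdmissiblePath x He where
  γ := geodesicCurve x t
  a1 s := (geodesicVelocity x t s).1
  a2 s := (geodesicVelocity x t s).2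
  lipschitz := (contDiff_geodesicCurve x t).contDiffOn.exists_lipschitzOnWith one_ne_zero
    (convex_Icc 0 1) isCompact_Icc
  meas1 := by unfold geodesicVelocity; fun_prop
  meas2 := by unfold geodesicVelocity; fun_prop
  start := geodesicCurve_zero (sinc_pos ht).ne' hx
  endpoint := geodesicCurve_one x t
  admissible := .of_forall (hasDerivAt_geodesicCurve ht)

lemma pathLength_geodesic_sq {x : Heis} {t : ℝ} (ht : t ∈ Ioo (-π) π)
    (hx : x.2.2 = (x.1 ^ 2 + x.2.1 ^ 2) * areaRatio t) :
    pathLength (geodesic ht hx) ^ 2 = (x.1 ^ 2 + x.2.1 ^ 2) * (sinc t ^ 2)⁻¹ := by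
  have hlength : pathLength (geodesic ht hx) = √((x.1 ^ 2 + x.2.1 ^ 2) / sinc t ^ 2) := by
    simp only [pathLength, geodesic, geodesicVelocity_sq, setIntegral_const, volume_real_Icc,
      sub_zero, zero_le_one, sup_of_le_left, one_smul]
  rw [hlength, sq_sqrt (by positivity), div_eq_mul_inv]

lemma supportFunctional_radialCoords {x : Heis} {t : ℝ} (ht : t ∈ Ioo (-π) π)
    (hx : x.2.2 = (x.1 ^ 2 + x.2.1 ^ 2) * areaRatio t) :
    supportFunctional t (radialCoords x) = (x.1 ^ 2 + x.2.1 ^ 2) * (sinc t ^ 2)⁻¹ := by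
  rw [← cos_div_sinc_add_mul_areaRatio ht, supportFunctional_apply, radialCoords, hx]
  ring

lemma pathLength_geodesic_le {x : Heis} {t : ℝ} (ht : t ∈ Ioo (-π) π)
    (hx : x.2.2 = (x.1 ^ 2 + x.2.1 ^ 2) * areaRatio t) (P : AdmissiblePath x He) :
    pathLength (geodesic ht hx) ≤ pathLength P := by
  refine le_of_sq_le_sq ?_ P.pathLength_nonneg
  rw [pathLength_geodesic_sq, ← supportFunctional_radialCoords ht hx]
  exact P.supportFunctional_le_sq ht

lemma ccNorm_eq_pathLength_geodesic {x : Heis} {t : ℝ} (ht : t ∈ Ioo (-π) π)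
    (hx : x.2.2 = (x.1 ^ 2 + x.2.1 ^ 2) * areaRatio t) :
    ccNorm x = pathLength (geodesic ht hx) := by
  refine IsLeast.csInf_eq ⟨⟨geodesic ht hx, rfl⟩, ?_⟩
  rintro _ ⟨P, rfl⟩
  exact pathLength_geodesic_le ht hx P

/-- Half the central angle of the arc underlying the geodesic from `x` to the identity, for `x` off
the vertical axis. -/
def geodesicAngle (x : Heis) : ℝ := halfAngle (x.2.2 / (x.1 ^ 2 + x.2.1 ^ 2))

lemma geodesicAngle_mem (x : Heis) : geodesicAngle x ∈ Ioo (-π) π := halfAngle_mem _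

lemma continuousAt_geodesicAngle {x : Heis} (hx : x.1 ^ 2 + x.2.1 ^ 2 ≠ 0) :
    ContinuousAt geodesicAngle x := by
  refine continuous_halfAngle.continuousAt.comp ?_
  fun_prop (disch := assumption)

lemma height_eq_mul_areaRatio {x : Heis} (hx : x.1 ^ 2 + x.2.1 ^ 2 ≠ 0) :
    x.2.2 = (x.1 ^ 2 + x.2.1 ^ 2) * areaRatio (geodesicAngle x) := by
  rw [geodesicAngle, areaRatio_halfAngle, mul_div_cancel₀ _ hx]

lemma ccNorm_sq {x : Heis} (hx : x.1 ^ 2 + x.2.1 ^ 2 ≠ 0) :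
    ccNorm x ^ 2 = (x.1 ^ 2 + x.2.1 ^ 2) * (sinc (geodesicAngle x) ^ 2)⁻¹ := by
  rw [ccNorm_eq_pathLength_geodesic (geodesicAngle_mem x) (height_eq_mul_areaRatio hx),
    pathLength_geodesic_sq]

lemma ccNorm_sq_eq_supportFunctional {x : Heis} (hx : x.1 ^ 2 + x.2.1 ^ 2 ≠ 0) :
    ccNorm x ^ 2 = supportFunctional (geodesicAngle x) (radialCoords x) := by
  rw [ccNorm_sq hx,
    supportFunctional_radialCoords (geodesicAngle_mem x) (height_eq_mul_areaRatio hx)]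

lemma supportFunctional_le_ccNorm_sq {x : Heis} (hx : x.1 ^ 2 + x.2.1 ^ 2 ≠ 0) {t : ℝ}
    (ht : t ∈ Ioo (-π) π) : supportFunctional t (radialCoords x) ≤ ccNorm x ^ 2 := by
  rw [ccNorm_eq_pathLength_geodesic (geodesicAngle_mem x) (height_eq_mul_areaRatio hx)]
  exact AdmissiblePath.supportFunctional_le_sq _ ht

end Geodesics

section Eikonal

/-- The envelope theorem: if the functional `A y` is maximal at `Q y` among the functionals `A z`
with `z` near `y`, then only the variation of `Q` contributes to the derivative of the maximum. -/
lemma hasFDerivAt_apply_of_eventually_le {E F : Type*} [NormedAddCommGroup E] [NormedSpace ℝ E]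
    [NormedAddCommGroup F] [NormedSpace ℝ F] {A : E → F →L[ℝ] ℝ} {Q : E → F} {Q' : E →L[ℝ] F}
    {x : E} (hA : ContinuousAt A x) (hQ : HasFDerivAt Q Q' x)
    (hmax : ∀ᶠ y in 𝓝 x, A x (Q y) ≤ A y (Q y) ∧ A y (Q x) ≤ A x (Q x)) :
    HasFDerivAt (fun y ↦ A y (Q y)) ((A x).comp Q') x := by
  have hbound : (fun y ↦ (A y - A x) (Q y)) =O[𝓝 x] fun y ↦ ‖A y - A x‖ * ‖Q y - Q x‖ := by
    refine .of_bound 1 (hmax.mono fun y ⟨hy, hx⟩ ↦ ?_)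
    rw [one_mul, norm_of_nonneg (by simpa using hy), norm_mul, norm_norm, norm_norm]
    calc (A y - A x) (Q y) ≤ (A y - A x) (Q y - Q x) := by
          simp only [map_sub, _root_.sub_apply]
          linarith [hx]
      _ ≤ ‖A y - A x‖ * ‖Q y - Q x‖ := (le_abs_self _).trans ((A y - A x).le_opNorm _)
  have hsmall : (fun y ↦ ‖A y - A x‖ * ‖Q y - Q x‖) =o[𝓝 x] fun y ↦ 1 * ‖y - x‖ :=
    (Asymptotics.isLittleO_one_iff ℝ |>.2 (tendsto_iff_norm_sub_tendsto_zero.1 hA)).mul_isBigO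
      hQ.isBigO_sub.norm_norm
  have hdiff : HasFDerivAt (fun y ↦ (A y - A x) (Q y)) (0 : E →L[ℝ] ℝ) x := by
    refine .of_isLittleO ?_
    simpa using hbound.trans_isLittleO hsmall
  refine ((hdiff.add ((A x).hasFDerivAt.comp x hQ)).congr_fderiv (zero_add _)).congr_of_eventuallyEq
    (.of_forall fun y ↦ ?_)
  simp

lemma continuousAt_supportFunctional {t : ℝ} (ht : t ∈ Ioo (-π) π) :
    ContinuousAt supportFunctional t := by
  have hsinc := continuous_sinc.continuousAt (x := t)
  have hsinc_ne := (sinc_pos ht).ne'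
  unfold supportFunctional
  fun_prop (disch := assumption)

/-- The derivative of `radialCoords` at `x`. -/
def radialCoordsFDeriv (x : Heis) : Heis →L[ℝ] ℝ × ℝ :=
  ((2 * x.1) • .fst ℝ ℝ (ℝ × ℝ) + (2 * x.2.1) • (.fst ℝ ℝ ℝ ∘L .snd ℝ ℝ (ℝ × ℝ))).prod
    (.snd ℝ ℝ ℝ ∘L .snd ℝ ℝ (ℝ × ℝ))

lemma radialCoordsFDeriv_apply (x v : Heis) :
    radialCoordsFDeriv x v = (2 * x.1 * v.1 + 2 * x.2.1 * v.2.1, v.2.2) := rfl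

lemma hasFDerivAt_radialCoords (x : Heis) :
    HasFDerivAt radialCoords (radialCoordsFDeriv x) x := by
  have hvert : HasFDerivAt (fun x : Heis ↦ x.2) (.snd ℝ ℝ (ℝ × ℝ)) x := hasFDerivAt_snd
  have h1 : HasFDerivAt (fun x : Heis ↦ x.1) (.fst ℝ ℝ (ℝ × ℝ)) x := hasFDerivAt_fst
  refine (((h1.pow 2).add (hvert.fst.pow 2)).prodMk hvert.snd).congr_fderiv ?_
  simp [radialCoordsFDeriv]

lemma hasFDerivAt_ccNorm_sq {x : Heis} (hx : x.1 ^ 2 + x.2.1 ^ 2 ≠ 0) :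
    HasFDerivAt (fun y ↦ ccNorm y ^ 2)
      ((supportFunctional (geodesicAngle x)).comp (radialCoordsFDeriv x)) x := by
  have hne : ∀ᶠ y : Heis in 𝓝 x, y.1 ^ 2 + y.2.1 ^ 2 ≠ 0 := by
    have h : Continuous fun y : Heis ↦ y.1 ^ 2 + y.2.1 ^ 2 := by fun_prop
    exact h.continuousAt.eventually_ne hx
  refine (hasFDerivAt_apply_of_eventually_le
    (A := fun y ↦ supportFunctional (geodesicAngle y))
    ((continuousAt_supportFunctional (geodesicAngle_mem x)).comp (continuousAt_geodesicAngle hx))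
    (hasFDerivAt_radialCoords x) ?_).congr_of_eventuallyEq
    (hne.mono fun y hy ↦ ccNorm_sq_eq_supportFunctional hy)
  filter_upwards [hne] with y hy
  rw [← ccNorm_sq_eq_supportFunctional hx, ← ccNorm_sq_eq_supportFunctional hy]
  exact ⟨supportFunctional_le_ccNorm_sq hy (geodesicAngle_mem x),
    supportFunctional_le_ccNorm_sq hx (geodesicAngle_mem y)⟩

lemma gradLen_eq_of_hasFDerivAt {f : Heis → ℝ} {f' : Heis →L[ℝ] ℝ} {x : Heis}
    (hf : HasFDerivAt f f' x) :
    gradLen f x = √(f' (1, 0, -x.2.1 / 2) ^ 2 + f' (0, 1, x.1 / 2) ^ 2) := by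
  have h1 : ((1, 0, -x.2.1 / 2) : Heis) = (1, 0, 0) - (x.2.1 / 2) • (0, 0, 1) := by
    simp [neg_div]
  have h2 : ((0, 1, x.1 / 2) : Heis) = (0, 1, 0) + (x.1 / 2) • (0, 0, 1) := by simp
  rw [gradLen, X1, X2, hf.fderiv, h1, h2, map_sub, map_add, map_smul, map_smul, smul_eq_mul,
    smul_eq_mul]

lemma ccNorm_nonneg (x : Heis) : 0 ≤ ccNorm x := by
  refine Real.sInf_nonneg ?_
  rintro _ ⟨P, rfl⟩
  exact P.pathLength_nonneg

lemma ccNorm_ne_zero {x : Heis} (hx : x.1 ^ 2 + x.2.1 ^ 2 ≠ 0) : ccNorm x ≠ 0 := by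
  have hsinc := (sinc_pos (geodesicAngle_mem x)).ne'
  rw [← pow_ne_zero_iff two_ne_zero, ccNorm_sq hx]
  positivity

lemma hasFDerivAt_ccNorm {x : Heis} (hx : x.1 ^ 2 + x.2.1 ^ 2 ≠ 0) :
    HasFDerivAt ccNorm
      ((1 / (2 * ccNorm x)) •
        (supportFunctional (geodesicAngle x)).comp (radialCoordsFDeriv x)) x := by
  simpa only [sqrt_sq (ccNorm_nonneg _)] using
    (hasFDerivAt_ccNorm_sq hx).sqrt (pow_ne_zero 2 (ccNorm_ne_zero hx))

lemma cos_div_sinc_sq_add_sq {t : ℝ} (ht : t ∈ Ioo (-π) π) :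
    (cos t / sinc t) ^ 2 + t ^ 2 = (sinc t ^ 2)⁻¹ := by
  have hsinc := (sinc_pos ht).ne'
  field_simp
  rw [← mul_pow, mul_comm, mul_sinc, cos_sq_add_sin_sq]

lemma gradLen_ccNorm {x : Heis} (hx : x.1 ^ 2 + x.2.1 ^ 2 ≠ 0) : gradLen ccNorm x = 1 := by
  have hd := ccNorm_ne_zero hx
  rw [gradLen_eq_of_hasFDerivAt (hasFDerivAt_ccNorm hx), sqrt_eq_one]
  set t := geodesicAngle x
  set A := (supportFunctional t).comp (radialCoordsFDeriv x) with hA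
  have hX1 : A (1, 0, -x.2.1 / 2) = 2 * (cos t / sinc t * x.1 - t * x.2.1) := by
    rw [hA, ContinuousLinearMap.comp_apply, radialCoordsFDeriv_apply, supportFunctional_apply]
    ring
  have hX2 : A (0, 1, x.1 / 2) = 2 * (cos t / sinc t * x.2.1 + t * x.1) := by
    rw [hA, ContinuousLinearMap.comp_apply, radialCoordsFDeriv_apply, supportFunctional_apply]
    ring
  have hsum : A (1, 0, -x.2.1 / 2) ^ 2 + A (0, 1, x.1 / 2) ^ 2 = 4 * ccNorm x ^ 2 := by
    rw [hX1, hX2, ccNorm_sq hx, ← cos_div_sinc_sq_add_sq (geodesicAngle_mem x)]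
    ring
  simp only [_root_.smul_apply, smul_eq_mul]
  rw [mul_pow, mul_pow, ← mul_add, hsum]
  field_simp
  norm_num

end Eikonal

end

/-- The eikonal equation: at every `x = (x₁,x₂,x₃)` with `(x₁,x₂) ≠ (0,0)`, the
Carnot–Carathéodory distance to the identity is differentiable and its sub-gradient
has length `1`:  `|∇d(x)| = ((X₁ d(x))² + (X₂ d(x))²)^{1/2} = 1`. -/
theorem heisenberg_eikonal (x : Heis) (hx : (x.1, x.2.1) ≠ ((0 : ℝ), (0 : ℝ))) :
    DifferentiableAt ℝ ccNorm x ∧ gradLen ccNorm x = 1 := by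
  have hq : x.1 ^ 2 + x.2.1 ^ 2 ≠ 0 := fun h ↦ hx <|
    Prod.ext (by nlinarith) (by nlinarith)
  exact ⟨(hasFDerivAt_ccNorm hq).differentiableAt, gradLen_ccNorm hq⟩
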